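/- arXiv:1109.0854 — 2 statements merged into one kernel-verified Lean document; each statement's English description precedes it below -/
import Mathlib

section
/- Let A be a linear relation between X and Z and B a linear relation between X and Y. The following are equivalent: (i) there exists a linear relation C between Y and Z such that A ⊆ C∘B; (ii) dom A ⊆ dom B; (iii) A ⊆ A∘(B⁻¹)∘B. -/
/-!
Linear relations between vector spaces, following Popovici–Sebestyén,
"Factorizations of Linear Relations".

A linear relation between `X` and `Y` is a linear subspace of `X × Y`,
formalized as `Submodule 𝕂 (X × Y)`.
-/

universe u

namespace LinRel

variable {𝕂 : Type u} [Field 𝕂]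
variable {X Y Z : Type u} [AddCommGroup X] [Module 𝕂 X]
  [AddCommGroup Y] [Module 𝕂 Y] [AddCommGroup Z] [Module 𝕂 Z]

/-- The domain of a linear relation. -/
def dom (R : Submodule 𝕂 (X × Y)) : Submodule 𝕂 X :=
  R.map (LinearMap.fst 𝕂 X Y)

/-- The range of a linear relation. -/
def ran (R : Submodule 𝕂 (X × Y)) : Submodule 𝕂 Y :=
  R.map (LinearMap.snd 𝕂 X Y)

/-- The kernel of a linear relation: `{x | (x, 0) ∈ R}`. -/
def ker (R : Submodule 𝕂 (X × Y)) : Submodule 𝕂 X :=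
  R.comap ((LinearMap.id : X →ₗ[𝕂] X).prod (0 : X →ₗ[𝕂] Y))

/-- The multivalued part of a linear relation: `{y | (0, y) ∈ R}`. -/
def mul (R : Submodule 𝕂 (X × Y)) : Submodule 𝕂 Y :=
  R.comap ((0 : Y →ₗ[𝕂] X).prod (LinearMap.id : Y →ₗ[𝕂] Y))

/-- The inverse of a linear relation: `{(y, x) | (x, y) ∈ R}`. -/
def inv (R : Submodule 𝕂 (X × Y)) : Submodule 𝕂 (Y × X) :=
  R.map ((LinearMap.snd 𝕂 X Y).prod (LinearMap.fst 𝕂 X Y))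

/-- The product (composition) of two linear relations:
`S ∘ R = {(x, z) | ∃ y, (x, y) ∈ R ∧ (y, z) ∈ S}`. -/
def comp (S : Submodule 𝕂 (Y × Z)) (R : Submodule 𝕂 (X × Y)) : Submodule 𝕂 (X × Z) where
  carrier := {p | ∃ y, (p.1, y) ∈ R ∧ (y, p.2) ∈ S}
  add_mem' := by
    rintro ⟨a, c⟩ ⟨a', c'⟩ ⟨y, h1, h2⟩ ⟨y', h1', h2'⟩
    exact ⟨y + y', R.add_mem h1 h1', S.add_mem h2 h2'⟩
  zero_mem' := ⟨0, R.zero_mem, S.zero_mem⟩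
  smul_mem' := by
    rintro c ⟨a, b⟩ ⟨y, h1, h2⟩
    exact ⟨c • y, R.smul_mem c h1, S.smul_mem c h2⟩

/-- The image `R(X₀)` of a subspace `X₀` under a linear relation `R`. -/
def img (R : Submodule 𝕂 (X × Y)) (X₀ : Submodule 𝕂 X) : Submodule 𝕂 Y :=
  ran (R ⊓ X₀.prod ⊤)

/-- The preimage `R⁻¹(Y₀)` of a subspace `Y₀` under a linear relation `R`. -/
def preimg (R : Submodule 𝕂 (X × Y)) (Y₀ : Submodule 𝕂 Y) : Submodule 𝕂 X :=
  img (inv R) Y₀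

end LinRel


open LinRel

variable {𝕂 : Type u} [Field 𝕂]
variable {X Y Z : Type u} [AddCommGroup X] [Module 𝕂 X]
  [AddCommGroup Y] [Module 𝕂 Y] [AddCommGroup Z] [Module 𝕂 Z]

namespace LinRel

section Membership

variable {R : Submodule 𝕂 (X × Y)} {S : Submodule 𝕂 (Y × Z)} {x : X} {y : Y} {z : Z}

theorem mem_dom : x ∈ dom R ↔ ∃ y, (x, y) ∈ R := by
  simp [dom]

theorem mem_inv : (y, x) ∈ inv R ↔ (x, y) ∈ R := by
  simp [inv]

theorem mem_comp : (x, z) ∈ comp S R ↔ ∃ y, (x, y) ∈ R ∧ (y, z) ∈ S :=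
  Iff.rfl

theorem diag_mem_comp_inv_self : (x, x) ∈ comp (inv R) R ↔ x ∈ dom R := by
  simp only [mem_comp, mem_inv, and_self, mem_dom]

end Membership

theorem comp_assoc {W : Type u} [AddCommGroup W] [Module 𝕂 W] (T : Submodule 𝕂 (Z × W))
    (S : Submodule 𝕂 (Y × Z)) (R : Submodule 𝕂 (X × Y)) :
    comp (comp T S) R = comp T (comp S R) := by
  ext ⟨x, w⟩
  constructor
  · rintro ⟨y, hxy, z, hyz, hzw⟩
    exact ⟨z, ⟨y, hxy, hyz⟩, hzw⟩
  · rintro ⟨z, ⟨y, hxy, hyz⟩, hzw⟩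
    exact ⟨y, hxy, z, hyz, hzw⟩

theorem dom_mono {R S : Submodule 𝕂 (X × Y)} (h : R ≤ S) : dom R ≤ dom S :=
  Submodule.map_mono h

theorem dom_comp_le (S : Submodule 𝕂 (Y × Z)) (R : Submodule 𝕂 (X × Y)) :
    dom (comp S R) ≤ dom R := by
  intro x hx
  obtain ⟨_, y, hxy, _⟩ := mem_dom.1 hx
  exact mem_dom.2 ⟨y, hxy⟩

theorem dom_le_of_le_comp {A : Submodule 𝕂 (X × Z)} {B : Submodule 𝕂 (X × Y)}
    {C : Submodule 𝕂 (Y × Z)} (h : A ≤ comp C B) : dom A ≤ dom B :=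
  (dom_mono h).trans (dom_comp_le C B)

theorem le_comp_comp_inv_self_iff {A : Submodule 𝕂 (X × Z)} {B : Submodule 𝕂 (X × Y)} :
    A ≤ comp A (comp (inv B) B) ↔ dom A ≤ dom B := by
  constructor
  · intro h
    exact (dom_le_of_le_comp h).trans (dom_comp_le (inv B) B)
  · rintro h ⟨x, z⟩ hxz
    have hx : x ∈ dom B := h (mem_dom.2 ⟨z, hxz⟩)
    exact mem_comp.2 ⟨x, diag_mem_comp_inv_self.2 hx, hxz⟩

end LinRel

/-- Corollary 2.3: `A ⊆ CB` for some linear relation `C` iff `dom A ⊆ dom B`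
iff `A ⊆ A B⁻¹ B`. -/
theorem statement_1 (A : Submodule 𝕂 (X × Z)) (B : Submodule 𝕂 (X × Y)) :
    ((∃ C : Submodule 𝕂 (Y × Z), A ≤ comp C B) ↔ dom A ≤ dom B) ∧
    (dom A ≤ dom B ↔ A ≤ comp A (comp (inv B) B)) := by
  refine ⟨⟨?_, fun h => ⟨comp A (inv B), ?_⟩⟩, le_comp_comp_inv_self_iff.symm⟩
  · rintro ⟨C, hC⟩
    exact dom_le_of_le_comp hC
  · rw [comp_assoc]
    exact le_comp_comp_inv_self_iff.2 h
end

section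
/- Let A be a linear relation between X and Z which is (the graph of) an operator, and B a linear relation between Y and Z. Then there exists a linear relation C between X and Y which is (the graph of) an operator with A ⊆ B∘C if and only if ran A ⊆ ran B. -/
/-!
Linear relations between vector spaces, following Popovici–Sebestyén,
"Factorizations of Linear Relations".

A linear relation between `X` and `Y` is a linear subspace of `X × Y`,
formalized as `Submodule 𝕂 (X × Y)`.
-/

universe u

open LinRel

variable {𝕂 : Type u} [Field 𝕂]
variable {X Y Z : Type u} [AddCommGroup X] [Module 𝕂 X]
  [AddCommGroup Y] [Module 𝕂 Y] [AddCommGroup Z] [Module 𝕂 Z]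

/-!
The relation `B⁻¹A` collects the candidate values for `C`. When `ran A ⊆ ran B` its domain is all of
`dom A`, and a complement of `{0} × mul (B⁻¹A)` in `B⁻¹A` is an operator `C` with the same domain.
For `(x, z) ∈ A` and `(x, y) ∈ C` one only gets `(y, z') ∈ B` for some `z'` with `(x, z') ∈ A`, but
the error `z - z'` lies in `mul A`, which `B` absorbs as soon as `mul A ⊆ mul B`. Conversely, an
operator `C` adds nothing to the multivalued part: `mul (BC) = mul B`, while `ran (BC) ⊆ ran B`.
-/

namespace LinRel

section Membership

variable {R : Submodule 𝕂 (X × Y)} {S : Submodule 𝕂 (Y × Z)} {x : X} {y : Y} {z : Z}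

theorem mem_ran : y ∈ ran R ↔ ∃ x, (x, y) ∈ R := by
  simp [ran]

theorem mem_mul : y ∈ mul R ↔ (0, y) ∈ R :=
  Iff.rfl

end Membership

theorem ran_mono {R S : Submodule 𝕂 (X × Y)} (h : R ≤ S) : ran R ≤ ran S :=
  Submodule.map_mono h

theorem mul_mono {R S : Submodule 𝕂 (X × Y)} (h : R ≤ S) : mul R ≤ mul S :=
  Submodule.comap_mono h

theorem dom_inv (R : Submodule 𝕂 (X × Y)) : dom (inv R) = ran R := by
  ext y
  simp only [mem_dom, mem_inv, mem_ran]

theorem ran_comp_le (S : Submodule 𝕂 (Y × Z)) (R : Submodule 𝕂 (X × Y)) :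
    ran (comp S R) ≤ ran S := by
  intro z hz
  obtain ⟨x, y, -, hyz⟩ := mem_ran.mp hz
  exact mem_ran.mpr ⟨y, hyz⟩

theorem dom_comp_of_ran_le_dom {S : Submodule 𝕂 (Y × Z)} {R : Submodule 𝕂 (X × Y)}
    (h : ran R ≤ dom S) : dom (comp S R) = dom R := by
  ext x
  simp only [mem_dom, mem_comp]
  constructor
  · rintro ⟨z, y, hxy, -⟩
    exact ⟨y, hxy⟩
  · rintro ⟨y, hxy⟩
    obtain ⟨z, hyz⟩ := mem_dom.mp (h (mem_ran.mpr ⟨x, hxy⟩))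
    exact ⟨z, y, hxy, hyz⟩

theorem mul_comp_of_mul_eq_bot {R : Submodule 𝕂 (X × Y)} (hR : mul R = ⊥)
    (S : Submodule 𝕂 (Y × Z)) : mul (comp S R) = mul S := by
  ext z
  simp only [mem_mul (R := comp S R), mem_comp, ← mem_mul (R := R), hR, Submodule.mem_bot,
    exists_eq_left, mem_mul]

theorem mul_eq_bot_iff_disjoint_ker_fst {R : Submodule 𝕂 (X × Y)} :
    mul R = ⊥ ↔ Disjoint (LinearMap.ker (LinearMap.fst 𝕂 X Y)) R := by
  rw [Submodule.eq_bot_iff, Submodule.disjoint_def]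
  constructor
  · rintro h ⟨x, y⟩ (rfl : x = 0) hy
    exact Prod.ext rfl (h y hy)
  · exact fun h y hy => congrArg Prod.snd (h (0, y) rfl hy)

theorem exists_le_mul_eq_bot_dom_eq (R : Submodule 𝕂 (X × Y)) :
    ∃ C ≤ R, mul C = ⊥ ∧ dom C = dom R := by
  set K := LinearMap.ker (LinearMap.fst 𝕂 X Y)
  obtain ⟨C, hdisj, hsup⟩ :=
    IsModularLattice.exists_disjoint_and_sup_eq (inf_le_right : K ⊓ R ≤ R)
  have hCR : C ≤ R := hsup ▸ le_sup_right
  refine ⟨C, hCR, ?_, ?_⟩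
  · rw [mul_eq_bot_iff_disjoint_ker_fst]
    rwa [disjoint_assoc, inf_eq_right.mpr hCR] at hdisj
  · have hmap : (K ⊓ R).map (LinearMap.fst 𝕂 X Y) = ⊥ :=
      LinearMap.le_ker_iff_map.mp inf_le_left
    rw [dom, dom, ← hsup, Submodule.map_sup, hmap, bot_sup_eq]

theorem le_comp_of_le_inv_comp {A : Submodule 𝕂 (X × Z)} {B : Submodule 𝕂 (Y × Z)}
    {C : Submodule 𝕂 (X × Y)} (hC : C ≤ comp (inv B) A) (hdom : dom A ≤ dom C)
    (hmul : mul A ≤ mul B) : A ≤ comp B C := by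
  rintro ⟨x, z⟩ hxz
  obtain ⟨y, hxy⟩ := mem_dom.mp (hdom (mem_dom.mpr ⟨z, hxz⟩))
  obtain ⟨z', hxz', hyz'⟩ := mem_comp.mp (hC hxy)
  have hzz' : z - z' ∈ mul B := hmul (by simpa [mem_mul] using A.sub_mem hxz hxz')
  have hyz : (y, z) ∈ B := by
    simpa using B.add_mem (mem_inv.mp hyz') (mem_mul.mp hzz')
  exact mem_comp.mpr ⟨y, hxy, hyz⟩

end LinRel

theorem statement_7_general (A : Submodule 𝕂 (X × Z)) (B : Submodule 𝕂 (Y × Z)) :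
    (∃ C : Submodule 𝕂 (X × Y), mul C = ⊥ ∧ A ≤ comp B C) ↔
      ran A ≤ ran B ∧ mul A ≤ mul B := by
  constructor
  · rintro ⟨C, hC, hAC⟩
    exact ⟨(ran_mono hAC).trans (ran_comp_le B C),
      (mul_mono hAC).trans_eq (mul_comp_of_mul_eq_bot hC B)⟩
  · rintro ⟨hran, hmul⟩
    obtain ⟨C, hCle, hC, hdom⟩ := exists_le_mul_eq_bot_dom_eq (comp (inv B) A)
    have hdomA : dom (comp (inv B) A) = dom A :=
      dom_comp_of_ran_le_dom (hran.trans_eq (dom_inv B).symm)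
    exact ⟨C, hC, le_comp_of_le_inv_comp hCle (hdom.trans hdomA).ge hmul⟩

/-- Corollary 3.2: if `A` is an operator, then there exists an operator `C`
with `A ⊆ BC` iff `ran A ⊆ ran B`. -/
theorem statement_7 (A : Submodule 𝕂 (X × Z)) (B : Submodule 𝕂 (Y × Z))
    (hA : mul A = ⊥) :
    (∃ C : Submodule 𝕂 (X × Y), mul C = ⊥ ∧ A ≤ comp B C) ↔ ran A ≤ ran B := by
  rw [statement_7_general, and_iff_left (hA.trans_le bot_le)]
end
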